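/- Let c > 0 be real, K a natural number, a a real number, and for each k = 1, …, K let C_k be a positive natural number and let j_{k,1}, …, j_{k,n_k} be real numbers with n_k ≤ C_k. Then (a + Σ_{k=1}^K Σ_{i=1}^{n_k} j_{k,i})^2 ≤ (1 + 1/c)·a^2 + (1 + 1/c)·Σ_{k=1}^K (1+c)^k·C_k·Σ_{i=1}^{n_k} j_{k,i}^2. -/

import Mathlib

/-!
The number `a` is treated as the term of index `0`. Cauchy–Schwarz with the weights `(1 + c)⁻ᵏ`,
whose sum over all `k ≥ 0` is `1 + 1 / c`, then bounds the square of the whole sum in one step, and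
Cauchy–Schwarz with unit weights bounds the square of the sum over each family.
-/

section WeightedCauchySchwarz

variable {𝕜 : Type*} [Field 𝕜] [LinearOrder 𝕜] [IsStrictOrderedRing 𝕜]

theorem sum_pow_le_inv_one_sub {r : 𝕜} (hr₀ : 0 ≤ r) (hr₁ : r < 1) (s : Finset ℕ) :
    ∑ k ∈ s, r ^ k ≤ (1 - r)⁻¹ := by
  have hs : s ⊆ Finset.Ico 0 (s.sup id + 1) := by
    simpa only [Finset.range_eq_Ico] using s.subset_range_sup_succ
  calc ∑ k ∈ s, r ^ k
      ≤ ∑ k ∈ Finset.Ico 0 (s.sup id + 1), r ^ k :=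
        Finset.sum_le_sum_of_subset_of_nonneg hs fun k _ _ ↦ pow_nonneg hr₀ k
    _ ≤ r ^ 0 / (1 - r) := geom_sum_Ico_le_of_lt_one hr₀ hr₁
    _ = (1 - r)⁻¹ := by rw [pow_zero, one_div]

theorem sum_inv_one_add_pow_le {c : 𝕜} (hc : 0 < c) (s : Finset ℕ) :
    ∑ k ∈ s, (1 + c)⁻¹ ^ k ≤ 1 + 1 / c := by
  have one_lt : 1 < 1 + c := lt_add_of_pos_right 1 hc
  calc ∑ k ∈ s, (1 + c)⁻¹ ^ k
      ≤ (1 - (1 + c)⁻¹)⁻¹ :=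
        sum_pow_le_inv_one_sub (by positivity) (inv_lt_one_of_one_lt₀ one_lt) s
    _ = 1 + 1 / c := by
        have : 1 - (1 + c)⁻¹ = c / (1 + c) := by field_simp; ring
        rw [this, inv_div]
        field_simp
        ring

theorem sq_sum_le_mul_sum_one_add_pow_mul_sq {c : 𝕜} (hc : 0 < c) (s : Finset ℕ) (b : ℕ → 𝕜) :
    (∑ k ∈ s, b k) ^ 2 ≤ (1 + 1 / c) * ∑ k ∈ s, (1 + c) ^ k * b k ^ 2 := by
  have cauchy_schwarz :
      (∑ k ∈ s, b k) ^ 2 ≤ (∑ k ∈ s, (1 + c)⁻¹ ^ k) * ∑ k ∈ s, (1 + c) ^ k * b k ^ 2 := by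
    refine Finset.sum_sq_le_sum_mul_sum_of_sq_le_mul s
      (fun k _ ↦ by positivity) (fun k _ ↦ by positivity) fun k _ ↦ ?_
    rw [inv_pow, inv_mul_cancel_left₀ (by positivity)]
  exact cauchy_schwarz.trans <| mul_le_mul_of_nonneg_right (sum_inv_one_add_pow_le hc s) <|
    Finset.sum_nonneg fun k _ ↦ by positivity

theorem sq_add_sum_le_mul_add_sum_one_add_pow_mul_sq {c : 𝕜} (hc : 0 < c) {s : Finset ℕ}
    (hs : 0 ∉ s) (a : 𝕜) (b : ℕ → 𝕜) :
    (a + ∑ k ∈ s, b k) ^ 2 ≤ (1 + 1 / c) * (a ^ 2 + ∑ k ∈ s, (1 + c) ^ k * b k ^ 2) := by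
  have ne_zero : ∀ k ∈ s, k ≠ 0 := fun k hk hk₀ ↦ hs (hk₀ ▸ hk)
  have sum_update : ∑ k ∈ s, Function.update b 0 a k = ∑ k ∈ s, b k :=
    Finset.sum_congr rfl fun k hk ↦ by rw [Function.update_of_ne (ne_zero k hk)]
  have sum_sq_update : ∑ k ∈ s, (1 + c) ^ k * Function.update b 0 a k ^ 2 =
      ∑ k ∈ s, (1 + c) ^ k * b k ^ 2 :=
    Finset.sum_congr rfl fun k hk ↦ by rw [Function.update_of_ne (ne_zero k hk)]
  simpa only [Finset.sum_insert hs, Function.update_self, sum_update, sum_sq_update, pow_zero,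
    one_mul] using sq_sum_le_mul_sum_one_add_pow_mul_sq hc (insert 0 s) (Function.update b 0 a)

theorem sq_sum_le_mul_sum_sq_of_card_le {ι : Type*} {t : Finset ι} {C : 𝕜}
    (hC : (t.card : 𝕜) ≤ C) (x : ι → 𝕜) :
    (∑ i ∈ t, x i) ^ 2 ≤ C * ∑ i ∈ t, x i ^ 2 :=
  sq_sum_le_card_mul_sum_sq.trans <|
    mul_le_mul_of_nonneg_right hC <| Finset.sum_nonneg fun i _ ↦ sq_nonneg (x i)

theorem fundamental_estimate_algebraic_general {c : 𝕜} (hc : 0 < c) {s : Finset ℕ} (hs : 0 ∉ s)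
    (a : 𝕜) {C : ℕ → 𝕜} {ι : ℕ → Type*} {t : ∀ k, Finset (ι k)}
    (hC : ∀ k ∈ s, ((t k).card : 𝕜) ≤ C k) (j : ∀ k, ι k → 𝕜) :
    (a + ∑ k ∈ s, ∑ i ∈ t k, j k i) ^ 2 ≤
      (1 + 1 / c) * a ^ 2 +
        (1 + 1 / c) * ∑ k ∈ s, (1 + c) ^ k * C k * ∑ i ∈ t k, j k i ^ 2 := by
  calc (a + ∑ k ∈ s, ∑ i ∈ t k, j k i) ^ 2
      ≤ (1 + 1 / c) * (a ^ 2 + ∑ k ∈ s, (1 + c) ^ k * (∑ i ∈ t k, j k i) ^ 2) :=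
        sq_add_sum_le_mul_add_sum_one_add_pow_mul_sq hc hs a _
    _ ≤ (1 + 1 / c) * (a ^ 2 + ∑ k ∈ s, (1 + c) ^ k * (C k * ∑ i ∈ t k, j k i ^ 2)) := by
        gcongr with k hk
        exact sq_sum_le_mul_sum_sq_of_card_le (hC k hk) (j k)
    _ = _ := by simp only [mul_add, mul_assoc]

end WeightedCauchySchwarz

theorem fundamental_estimate_algebraic
    (c : ℝ) (hc : 0 < c) (K : ℕ) (a : ℝ) (C n : ℕ → ℕ)
    (hC : ∀ k ∈ Finset.Icc 1 K, 0 < C k)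
    (hn : ∀ k ∈ Finset.Icc 1 K, n k ≤ C k)
    (j : ℕ → ℕ → ℝ) :
    (a + ∑ k ∈ Finset.Icc 1 K, ∑ i ∈ Finset.range (n k), j k i) ^ 2 ≤
      (1 + 1 / c) * a ^ 2 +
        (1 + 1 / c) * ∑ k ∈ Finset.Icc 1 K, (1 + c) ^ k * (C k : ℝ) *
          ∑ i ∈ Finset.range (n k), j k i ^ 2 :=
  fundamental_estimate_algebraic_general hc (by simp) a
    (fun k hk ↦ by rw [Finset.card_range]; exact_mod_cast hn k hk) j
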